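/- arXiv:2510.07605 — 2 statements merged into one kernel-verified Lean document; each statement's English description precedes it below -/
import Mathlib

section
/- Let D ∈ M_n(ℂ) be positive semidefinite with tr D = 1, and let φ(t) = t log t for t > 0, φ(0) = 0. Then tr(φ(D)) equals the maximum, over all finite resolutions of identity (p_1,…,p_k) in M_n(ℂ), of Σ_{i=1}^k tr(p_i D) · (log tr(p_i D) − log tr(p_i)), where a summand with tr(p_i D) = 0 is taken to be 0. (Variational formula for the Segal entropy of the state ω(x) = tr(xD) in terms of projective resolutions of identity.) -/
open scoped Matrix ComplexOrder

/-!
Let `λ_j` be the eigenvalues of a Hermitian matrix `A` and `f` a convex function. The diagonal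
entries `w_j` of a positive semidefinite matrix `B` in an eigenbasis of `A` are nonnegative and
satisfy `tr B = ∑ w_j` and `tr (B A) = ∑ w_j λ_j`, so Jensen's inequality for the weights
`w_j / tr B` reads `tr B * f (tr (B A) / tr B) ≤ ∑ w_j f (λ_j)`. If a family of such matrices `B`
sums to `1`, then its weights at each `j` sum to `1`, and adding the inequalities gives the upper
bound `∑ f (λ_j)`. It is attained by the projections onto the eigenvectors of `A`. For
`f x = x log x` the summand is `tr (B A) * (log tr (B A) - log tr B)`.
-/

open Matrix Unitary

theorem mul_div_mul_log_div {t : ℝ} (ht : t ≠ 0) (x : ℝ) :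
    t * (x / t * Real.log (x / t)) = x * (Real.log x - Real.log t) := by
  rcases eq_or_ne x 0 with rfl | hx
  · simp
  · rw [← mul_assoc, mul_div_cancel₀ x ht, Real.log_div hx ht]

section ResolutionOfIdentity

variable {ι κ R S : Type*} [Fintype ι] [Fintype κ] [Semiring R] [Star R] [Semiring S] [Star S]

/-- A finite resolution of identity: a finite family of nonzero, mutually orthogonal,
self-adjoint idempotents of a star ring with sum `1`. -/
structure IsResolutionOfIdentity (p : ι → R) : Prop extends CompleteOrthogonalIdempotents p where
  isSelfAdjoint : ∀ i, IsSelfAdjoint (p i)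
  ne_zero : ∀ i, p i ≠ 0

namespace IsResolutionOfIdentity

variable {p : ι → R}

theorem map {F : Type*} [FunLike F R S] [RingHomClass F R S] [StarHomClass F R S]
    (hp : IsResolutionOfIdentity p) (φ : F) (hφ : Function.Injective φ) :
    IsResolutionOfIdentity (φ ∘ p) where
  __ := hp.toCompleteOrthogonalIdempotents.map (φ : R →+* S)
  isSelfAdjoint i := (hp.isSelfAdjoint i).map φ
  ne_zero i := (map_ne_zero_iff φ hφ).mpr (hp.ne_zero i)

theorem comp_equiv (hp : IsResolutionOfIdentity p) (e : κ ≃ ι) :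
    IsResolutionOfIdentity (p ∘ e) where
  __ := (CompleteOrthogonalIdempotents.equiv e).mpr hp.toCompleteOrthogonalIdempotents
  isSelfAdjoint i := hp.isSelfAdjoint (e i)
  ne_zero i := hp.ne_zero (e i)

end IsResolutionOfIdentity

end ResolutionOfIdentity

section Matrix

variable {ι n α : Type*} [Fintype ι] [Fintype n] [DecidableEq n]

theorem trace_conjStarAlgAut [CommRing α] [StarRing α] (u : unitaryGroup n α)
    (B : Matrix n n α) : (conjStarAlgAut α _ u B).trace = B.trace := by
  rw [conjStarAlgAut_apply, trace_mul_cycle, coe_star_mul_self, one_mul]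

theorem isResolutionOfIdentity_matrix_iff [Semiring α] [Star α]
    {p : ι → Matrix n n α} :
    IsResolutionOfIdentity p ↔
      (∀ i, (p i).IsHermitian) ∧ (∀ i, p i * p i = p i) ∧ (∀ i, p i ≠ 0) ∧
        (∀ i j, i ≠ j → p i * p j = 0) ∧ ∑ i, p i = 1 :=
  ⟨fun hp => ⟨hp.isSelfAdjoint, hp.idem, hp.ne_zero, fun _ _ hij => hp.ortho hij, hp.complete⟩,
    fun ⟨hsa, hidem, hne, hortho, hsum⟩ =>
      { idem := hidem
        ortho := fun i j hij => hortho i j hij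
        complete := hsum
        isSelfAdjoint := hsa
        ne_zero := hne }⟩

theorem isResolutionOfIdentity_diagonal_single [Semiring α] [StarRing α] [Nontrivial α] :
    IsResolutionOfIdentity fun i : n => diagonal (Pi.single i (1 : α)) where
  __ := (CompleteOrthogonalIdempotents.single fun _ : n => α).map (diagonalRingHom n α)
  isSelfAdjoint i := isHermitian_diagonal_of_self_adjoint _ <| by simp [IsSelfAdjoint]
  ne_zero i := by simp

theorem IsResolutionOfIdentity.posSemidef [Ring α] [StarRing α] [PartialOrder α]
    [StarOrderedRing α] {p : ι → Matrix n n α} (hp : IsResolutionOfIdentity p) (i : ι) :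
    (p i).PosSemidef := by
  have hsa : (p i)ᴴ = p i := hp.isSelfAdjoint i
  have hpsd : ((p i)ᴴ * p i).PosSemidef := posSemidef_conjTranspose_mul_self (p i)
  rwa [hsa, (hp.idem i).eq] at hpsd

end Matrix

section RCLike

variable {ι 𝕜 n : Type*} [Fintype ι] [RCLike 𝕜] [Fintype n] {A B : Matrix n n 𝕜}
  {p : ι → Matrix n n 𝕜} {s : Set ℝ} {f : ℝ → ℝ}

theorem re_trace_pos_of_posSemidef (hB : B.PosSemidef) (hB₀ : B ≠ 0) :
    0 < RCLike.re B.trace :=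
  (RCLike.pos_iff.mp <| hB.trace_nonneg.lt_of_ne' fun h => hB₀ (hB.trace_eq_zero_iff.mp h)).1

variable [DecidableEq n]

/-- The (real parts of the) diagonal entries `⟨v_j, B v_j⟩` of `B` in the orthonormal eigenbasis
`v` of the Hermitian matrix `A`; the weights in Jensen's inequality. -/
noncomputable def eigenbasisDiag (hA : A.IsHermitian) (B : Matrix n n 𝕜) (j : n) : ℝ :=
  RCLike.re (conjStarAlgAut 𝕜 _ (star hA.eigenvectorUnitary) B j j)

/-- The orthogonal projection onto the line spanned by the `i`-th vector of the orthonormal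
eigenbasis of the Hermitian matrix `A`. -/
noncomputable def eigenprojection (hA : A.IsHermitian) (i : n) : Matrix n n 𝕜 :=
  conjStarAlgAut 𝕜 _ hA.eigenvectorUnitary (diagonal (Pi.single i 1))

theorem eigenbasisDiag_nonneg (hA : A.IsHermitian) (hB : B.PosSemidef) (j : n) :
    0 ≤ eigenbasisDiag hA B j := by
  have h := (hB.conjTranspose_mul_mul_same (hA.eigenvectorUnitary : Matrix n n 𝕜)).diag_nonneg
    (i := j)
  rw [eigenbasisDiag, conjStarAlgAut_star_apply]
  exact (RCLike.nonneg_iff.mp h).1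

theorem sum_eigenbasisDiag (hA : A.IsHermitian) (B : Matrix n n 𝕜) :
    ∑ j, eigenbasisDiag hA B j = RCLike.re B.trace := by
  simp_rw [eigenbasisDiag, ← map_sum]
  exact congrArg _ (trace_conjStarAlgAut _ B)

theorem sum_eigenbasisDiag_mul_eigenvalues (hA : A.IsHermitian) (B : Matrix n n 𝕜) :
    ∑ j, eigenbasisDiag hA B j * hA.eigenvalues j = RCLike.re (B * A).trace := by
  rw [← trace_conjStarAlgAut (star hA.eigenvectorUnitary), map_mul,
    hA.conjStarAlgAut_star_eigenvectorUnitary, trace, map_sum]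
  simp_rw [diag_apply, mul_diagonal, Function.comp_apply, RCLike.re_mul_ofReal, eigenbasisDiag]

theorem sum_eigenbasisDiag_of_sum_eq_one (hA : A.IsHermitian) (hp : ∑ i, p i = 1) (j : n) :
    ∑ i, eigenbasisDiag hA (p i) j = 1 := by
  simp_rw [eigenbasisDiag]
  rw [← map_sum, ← Matrix.sum_apply, ← map_sum, hp, map_one, one_apply_eq, RCLike.one_re]

theorem eigenbasisDiag_eigenprojection (hA : A.IsHermitian) (i : n) :
    eigenbasisDiag hA (eigenprojection hA i) = Pi.single i 1 := by
  ext j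
  rw [eigenbasisDiag, eigenprojection, ← conjStarAlgAut_mul_apply, star_mul_self, map_one]
  simp [Pi.single_apply, apply_ite]

theorem re_trace_eigenprojection (hA : A.IsHermitian) (i : n) :
    RCLike.re (eigenprojection hA i).trace = 1 := by
  simp [← sum_eigenbasisDiag hA, eigenbasisDiag_eigenprojection]

theorem re_trace_eigenprojection_mul (hA : A.IsHermitian) (i : n) :
    RCLike.re (eigenprojection hA i * A).trace = hA.eigenvalues i := by
  simp [← sum_eigenbasisDiag_mul_eigenvalues hA, eigenbasisDiag_eigenprojection, Pi.single_apply]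

theorem isResolutionOfIdentity_eigenprojection (hA : A.IsHermitian) :
    IsResolutionOfIdentity (eigenprojection hA) :=
  isResolutionOfIdentity_diagonal_single.map (conjStarAlgAut 𝕜 _ hA.eigenvectorUnitary)
    (EquivLike.injective _)

theorem trace_mul_map_div_le_sum_eigenbasisDiag (hA : A.IsHermitian) (hf : ConvexOn ℝ s f)
    (hs : ∀ j, hA.eigenvalues j ∈ s) (hB : B.PosSemidef) (hB₀ : B ≠ 0) :
    RCLike.re B.trace * f (RCLike.re (B * A).trace / RCLike.re B.trace) ≤
      ∑ j, eigenbasisDiag hA B j * f (hA.eigenvalues j) := by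
  have htr : 0 < RCLike.re B.trace := re_trace_pos_of_posSemidef hB hB₀
  have jensen := hf.map_centerMass_le (t := .univ) (fun j _ => eigenbasisDiag_nonneg hA hB j)
    (by rwa [sum_eigenbasisDiag]) fun j _ => hs j
  simp only [Finset.centerMass, sum_eigenbasisDiag, smul_eq_mul, Function.comp_apply,
    sum_eigenbasisDiag_mul_eigenvalues] at jensen
  rwa [inv_mul_eq_div, le_inv_mul_iff₀ htr] at jensen

theorem sum_trace_mul_map_div_le_sum_eigenvalues (hA : A.IsHermitian) (hf : ConvexOn ℝ s f)
    (hs : ∀ j, hA.eigenvalues j ∈ s) (hp : ∀ i, (p i).PosSemidef) (hp₀ : ∀ i, p i ≠ 0)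
    (hsum : ∑ i, p i = 1) :
    ∑ i, RCLike.re (p i).trace * f (RCLike.re (p i * A).trace / RCLike.re (p i).trace) ≤
      ∑ j, f (hA.eigenvalues j) :=
  calc
    _ ≤ ∑ i, ∑ j, eigenbasisDiag hA (p i) j * f (hA.eigenvalues j) :=
      Finset.sum_le_sum fun i _ =>
        trace_mul_map_div_le_sum_eigenbasisDiag hA hf hs (hp i) (hp₀ i)
    _ = ∑ j, (∑ i, eigenbasisDiag hA (p i) j) * f (hA.eigenvalues j) := by
      simp_rw [Finset.sum_mul]
      exact Finset.sum_comm
    _ = ∑ j, f (hA.eigenvalues j) := by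
      simp_rw [sum_eigenbasisDiag_of_sum_eq_one hA hsum, one_mul]

theorem isGreatest_sum_trace_mul_map_div (hA : A.IsHermitian) (hf : ConvexOn ℝ s f)
    (hs : ∀ j, hA.eigenvalues j ∈ s) :
    IsGreatest
      {r : ℝ | ∃ (k : ℕ) (p : Fin k → Matrix n n 𝕜), IsResolutionOfIdentity p ∧
        r = ∑ i, RCLike.re (p i).trace * f (RCLike.re (p i * A).trace / RCLike.re (p i).trace)}
      (∑ j, f (hA.eigenvalues j)) := by
  constructor
  · let e := (Fintype.equivFin n).symm
    refine ⟨_, eigenprojection hA ∘ e,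
      (isResolutionOfIdentity_eigenprojection hA).comp_equiv e, ?_⟩
    simp_rw [Function.comp_apply, re_trace_eigenprojection_mul, re_trace_eigenprojection, div_one,
      one_mul]
    exact (e.sum_comp fun j => f (hA.eigenvalues j)).symm
  · rintro _ ⟨k, p, hp, rfl⟩
    exact sum_trace_mul_map_div_le_sum_eigenvalues hA hf hs hp.posSemidef hp.ne_zero hp.complete

theorem segal_entropy_resolution_variational_general (D : Matrix n n 𝕜) (hD : D.PosSemidef) :
    IsGreatest
      {r : ℝ | ∃ (k : ℕ) (p : Fin k → Matrix n n 𝕜), IsResolutionOfIdentity p ∧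
        r = ∑ i, RCLike.re (p i * D).trace *
          (Real.log (RCLike.re (p i * D).trace) - Real.log (RCLike.re (p i).trace))}
      (∑ i, hD.1.eigenvalues i * Real.log (hD.1.eigenvalues i)) := by
  convert! isGreatest_sum_trace_mul_map_div hD.1 Real.convexOn_mul_log hD.eigenvalues_nonneg
    using 1
  refine Set.ext fun r => exists₂_congr fun k p => and_congr_right fun hp => ?_
  have htr (i : Fin k) : RCLike.re (p i).trace ≠ 0 :=
    (re_trace_pos_of_posSemidef (hp.posSemidef i) (hp.ne_zero i)).ne'
  simp_rw [mul_div_mul_log_div (htr _)]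

end RCLike

/-- Variational formula for the Segal entropy `tr(D log D)` of a state with density matrix `D`
(`D ≥ 0`, `tr D = 1`) in terms of finite resolutions of identity:
`tr(φ(D))`, `φ(t) = t log t`, `φ(0)=0`, is the maximum over resolutions `(p_1,…,p_k)` of
`Σ_i tr(p_i D) (log tr(p_i D) − log tr(p_i))`.  Summands with `tr(p_i D) = 0` vanish
automatically since `0 * x = 0` (and `Real.log 0 = 0`). -/
theorem segal_entropy_resolution_variational {n : ℕ}
    (D : Matrix (Fin n) (Fin n) ℂ) (hD : D.PosSemidef) (htr : D.trace = 1) :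
    IsGreatest
      {r : ℝ | ∃ (k : ℕ) (p : Fin k → Matrix (Fin n) (Fin n) ℂ),
        (∀ i, (p i).IsHermitian) ∧ (∀ i, p i * p i = p i) ∧ (∀ i, p i ≠ 0) ∧
        (∀ i j, i ≠ j → p i * p j = 0) ∧ (∑ i, p i = 1) ∧
        r = ∑ i, (Matrix.trace (p i * D)).re *
              (Real.log ((Matrix.trace (p i * D)).re) - Real.log ((Matrix.trace (p i)).re))}
      (∑ i, hD.1.eigenvalues i * Real.log (hD.1.eigenvalues i)) := by
  simpa only [isResolutionOfIdentity_matrix_iff, and_assoc, RCLike.re_eq_complex_re] using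
    segal_entropy_resolution_variational_general D hD
end

section
/- Let (X, 𝒜, μ) be a measure space with μ σ-finite, and let ρ : X → [0,∞) be measurable with ∫ ρ dμ = 1 and ρ log ρ ∈ L¹(μ) (convention 0·log 0 = 0). Then ∫ ρ log ρ dμ = sup over all countable measurable partitions (A_i)_{i∈ℕ} of X into sets of finite measure of Σ_i ω(A_i) (log ω(A_i) − log μ(A_i)), where ω(A_i) = ∫_{A_i} ρ dμ and summands with ω(A_i) = 0 or μ(A_i) = 0 are taken to be 0. -/
open MeasureTheory

/-!
On a cell `A` of finite measure the term `ω(A) (log ω(A) - log μ(A))` equals `μ(A) φ(⨍_A ρ)` with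
`φ t = t log t` convex, so by Jensen it is at most `∫_A ρ log ρ dμ`; summing over the cells bounds
every partition sum by the entropy. Conversely, if `ρ` varies by a factor of at most `exp δ` on each
cell, then `log ρ ≤ log (ω(A) / μ(A)) + δ` wherever `ρ > 0` on `A`. Weighting this error by `ρ`
itself makes it sum to `δ ∫ ρ dμ`, even though `μ` may be infinite.
-/

section LogFloor

/-- The largest element of `{exp (k * δ) | k : ℤ}` that is at most `t`, for `0 < δ` and `0 < t`:
rounding down to a geometric grid. The value at `0` is `0`, so that the grid covers `[0, ∞)`. -/
noncomputable def logFloor (δ t : ℝ) : ℝ :=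
  if t = 0 then 0 else Real.exp (⌊Real.log t / δ⌋ * δ)

lemma logFloor_nonneg (δ t : ℝ) : 0 ≤ logFloor δ t := by
  unfold logFloor
  split_ifs <;> positivity

lemma logFloor_le_self {δ t : ℝ} (hδ : 0 < δ) (ht : 0 ≤ t) : logFloor δ t ≤ t := by
  rcases ht.eq_or_lt with rfl | ht
  · simp [logFloor]
  · rw [logFloor, if_neg ht.ne', ← Real.le_log_iff_exp_le ht, ← le_div_iff₀ hδ]
    exact Int.floor_le _

lemma le_exp_mul_logFloor {δ t : ℝ} (hδ : 0 < δ) (ht : 0 ≤ t) :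
    t ≤ Real.exp δ * logFloor δ t := by
  rcases ht.eq_or_lt with rfl | ht
  · simp [logFloor]
  · rw [logFloor, if_neg ht.ne', ← Real.exp_add, ← Real.log_le_iff_le_exp ht]
    have h : Real.log t < (⌊Real.log t / δ⌋ + 1) * δ := (div_lt_iff₀ hδ).1 (Int.lt_floor_add_one _)
    linarith

lemma measurable_logFloor (δ : ℝ) : Measurable (logFloor δ) :=
  Measurable.ite (measurableSet_singleton 0) measurable_const <| by fun_prop

lemma countable_range_logFloor (δ : ℝ) : (Set.range (logFloor δ)).Countable := by
  refine ((Set.countable_range fun k : ℤ => Real.exp (k * δ)).insert 0).mono ?_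
  rintro _ ⟨t, rfl⟩
  unfold logFloor
  split_ifs <;> simp

end LogFloor

section Partition

variable {X : Type*} [MeasurableSpace X] {μ : Measure X}

/-- `A` is a countable measurable partition of `X` into sets of finite `μ`-measure. Cells may be
empty, so finite partitions are included. -/
structure IsFiniteMeasurePartition (μ : Measure X) (A : ℕ → Set X) : Prop where
  measurableSet : ∀ i, MeasurableSet (A i)
  pairwise_disjoint : Pairwise (Function.onFun Disjoint A)
  iUnion_eq_univ : ⋃ i, A i = Set.univ
  measure_lt_top : ∀ i, μ (A i) < ⊤

lemma IsFiniteMeasurePartition.hasSum_setIntegral {E : Type*} [NormedAddCommGroup E]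
    [NormedSpace ℝ E] {A : ℕ → Set X} (hA : IsFiniteMeasurePartition μ A) {f : X → E}
    (hf : Integrable f μ) : HasSum (fun i => ∫ x in A i, f x ∂μ) (∫ x, f x ∂μ) := by
  simpa only [hA.iUnion_eq_univ, setIntegral_univ] using
    hasSum_integral_iUnion hA.measurableSet hA.pairwise_disjoint hf.integrableOn

lemma exists_isFiniteMeasurePartition_forall_eq (μ : Measure X) [SigmaFinite μ] {Y : Type*}
    [MeasurableSpace Y] [MeasurableSingletonClass Y] {g : X → Y} (hg : Measurable g)
    (hg_range : (Set.range g).Countable) :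
    ∃ A, IsFiniteMeasurePartition μ A ∧ ∀ i, ∀ x ∈ A i, ∀ y ∈ A i, g x = g y := by
  have := hg_range.to_subtype
  obtain ⟨code, code_injective⟩ := exists_injective_nat (Set.range g × ℕ)
  let label : X → Set.range g × ℕ := fun x => (Set.rangeFactorization g x, spanningSetsIndex μ x)
  have label_measurable : Measurable label :=
    hg.subtype_mk.prodMk (measurableSet_spanningSetsIndex μ)
  have label_eq {i : ℕ} {x y : X} (hx : code (label x) = i) (hy : code (label y) = i) :
      label x = label y := code_injective (hx.trans hy.symm)
  refine ⟨fun i => (code ∘ label) ⁻¹' {i},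
    ⟨fun i => ?_, pairwise_disjoint_fiber _, ?_, fun i => ?_⟩,
    fun i x hx y hy => congrArg (fun p => (p.1 : Y)) (label_eq hx hy)⟩
  · exact (measurable_of_countable code).comp label_measurable (measurableSet_singleton i)
  · exact Set.iUnion_eq_univ_iff.2 fun x => ⟨_, rfl⟩
  · rcases ((code ∘ label) ⁻¹' {i}).eq_empty_or_nonempty with h_empty | ⟨x, hx⟩
    · simp [h_empty]
    · refine (measure_mono fun y hy => ?_).trans_lt
        (measure_spanningSets_lt_top μ (spanningSetsIndex μ x))
      rw [show spanningSetsIndex μ x = spanningSetsIndex μ y from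
        congrArg Prod.snd (label_eq hx hy)]
      exact mem_spanningSetsIndex μ y

lemma exists_isFiniteMeasurePartition_mem_Icc_exp_mul [SigmaFinite μ] {f : X → ℝ}
    (hf : AEMeasurable f μ) (hf_nonneg : 0 ≤ᵐ[μ] f) {δ : ℝ} (hδ : 0 < δ) :
    ∃ A, IsFiniteMeasurePartition μ A ∧
      ∀ i, ∃ a, 0 ≤ a ∧ ∀ᵐ x ∂μ.restrict (A i), f x ∈ Set.Icc a (Real.exp δ * a) := by
  obtain ⟨A, hA, hA_const⟩ := exists_isFiniteMeasurePartition_forall_eq μ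
    ((measurable_logFloor δ).comp hf.measurable_mk)
    ((countable_range_logFloor δ).mono (Set.range_comp_subset_range _ _))
  refine ⟨A, hA, fun i => ?_⟩
  rcases (A i).eq_empty_or_nonempty with h_empty | ⟨x₀, hx₀⟩
  · exact ⟨0, le_rfl, by simp [h_empty]⟩
  · refine ⟨logFloor δ (hf.mk f x₀), logFloor_nonneg _ _, ?_⟩
    filter_upwards [ae_restrict_mem (hA.measurableSet i), ae_restrict_of_ae hf.ae_eq_mk,
      ae_restrict_of_ae hf_nonneg] with x hx hx_mk hx_nonneg
    have h_floor : logFloor δ (hf.mk f x₀) = logFloor δ (f x) := by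
      rw [hx_mk]
      exact hA_const i x₀ hx₀ x hx
    rw [h_floor]
    exact ⟨logFloor_le_self hδ hx_nonneg, le_exp_mul_logFloor hδ hx_nonneg⟩

/-- The contribution `ω(A) (log ω(A) - log μ(A))`, `ω(A) = ∫_A ρ dμ`, of a cell `A` to the Segal
entropy of a partition. If `μ A = 0` it vanishes because `ω(A) = 0`; at `μ A = ∞` it has the junk
value `ω(A) log ω(A)`. -/
noncomputable def cellEntropy (μ : Measure X) (ρ : X → ℝ) (A : Set X) : ℝ :=
  (∫ x in A, ρ x ∂μ) * (Real.log (∫ x in A, ρ x ∂μ) - Real.log (μ.real A))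

section Cell

variable {ρ : X → ℝ} {A : Set X}

lemma cellEntropy_eq_measureReal_mul (ρ : X → ℝ) (hA : μ A ≠ 0) (hA_top : μ A ≠ ⊤) :
    cellEntropy μ ρ A =
      μ.real A * ((⨍ x in A, ρ x ∂μ) * Real.log (⨍ x in A, ρ x ∂μ)) := by
  have hm : μ.real A ≠ 0 := (measureReal_ne_zero_iff hA_top).2 hA
  rw [setAverage_eq, smul_eq_mul, inv_mul_eq_div, ← mul_assoc, mul_div_cancel₀ _ hm, cellEntropy]
  rcases eq_or_ne (∫ x in A, ρ x ∂μ) 0 with hω | hω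
  · simp [hω]
  · rw [Real.log_div hω hm]

lemma cellEntropy_le_setIntegral_mul_log (hA : μ A ≠ ⊤) (hρ : IntegrableOn ρ A μ)
    (hρ_nonneg : 0 ≤ᵐ[μ.restrict A] ρ)
    (hent : IntegrableOn (fun x => ρ x * Real.log (ρ x)) A μ) :
    cellEntropy μ ρ A ≤ ∫ x in A, ρ x * Real.log (ρ x) ∂μ := by
  rcases eq_or_ne (μ A) 0 with hA_zero | hA_zero
  · simp [cellEntropy, Measure.restrict_eq_zero.2 hA_zero]
  · have jensen : (⨍ x in A, ρ x ∂μ) * Real.log (⨍ x in A, ρ x ∂μ) ≤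
        ⨍ x in A, ρ x * Real.log (ρ x) ∂μ :=
      Real.convexOn_mul_log.map_set_average_le Real.continuous_mul_log.continuousOn isClosed_Ici
        hA_zero hA hρ_nonneg hρ hent
    calc cellEntropy μ ρ A
        = μ.real A * ((⨍ x in A, ρ x ∂μ) * Real.log (⨍ x in A, ρ x ∂μ)) :=
          cellEntropy_eq_measureReal_mul ρ hA_zero hA
      _ ≤ μ.real A * ⨍ x in A, ρ x * Real.log (ρ x) ∂μ := by gcongr
      _ = ∫ x in A, ρ x * Real.log (ρ x) ∂μ := measure_smul_setAverage _ hA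

lemma setIntegral_mul_log_le_cellEntropy_add {a δ : ℝ} (hA : μ A ≠ ⊤) (hρ : IntegrableOn ρ A μ)
    (hent : IntegrableOn (fun x => ρ x * Real.log (ρ x)) A μ) (ha : 0 ≤ a)
    (hρ_mem : ∀ᵐ x ∂μ.restrict A, ρ x ∈ Set.Icc a (Real.exp δ * a)) :
    ∫ x in A, ρ x * Real.log (ρ x) ∂μ ≤ cellEntropy μ ρ A + δ * ∫ x in A, ρ x ∂μ := by
  rcases eq_or_ne (μ A) 0 with hA_zero | hA_zero
  · simp [cellEntropy, Measure.restrict_eq_zero.2 hA_zero]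
  rcases ha.eq_or_lt with rfl | ha
  · have hρ_zero : ρ =ᵐ[μ.restrict A] 0 := by
      filter_upwards [hρ_mem] with x hx
      simpa using hx
    have hent_zero : (fun x => ρ x * Real.log (ρ x)) =ᵐ[μ.restrict A] 0 := by
      filter_upwards [hρ_zero] with x hx
      simp [hx]
    simp [cellEntropy, integral_eq_zero_of_ae hρ_zero, integral_eq_zero_of_ae hent_zero]
  set ω := ∫ x in A, ρ x ∂μ
  have hm : 0 < μ.real A := ENNReal.toReal_pos hA_zero hA
  have mass_le : a * μ.real A ≤ ω := by
    have : IntegrableOn (fun _ => a) A μ := integrableOn_const hA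
    simpa [mul_comm] using integral_mono_ae this hρ (hρ_mem.mono fun x hx => hx.1)
  have hω_nonneg : 0 ≤ ω := (mul_pos ha hm).le.trans mass_le
  have log_a_le : Real.log a ≤ Real.log ω - Real.log (μ.real A) := by
    rw [le_sub_iff_add_le, ← Real.log_mul ha.ne' hm.ne']
    exact Real.log_le_log (mul_pos ha hm) mass_le
  have log_ρ_le : ∀ᵐ x ∂μ.restrict A, ρ x * Real.log (ρ x) ≤ ρ x * (δ + Real.log a) := by
    filter_upwards [hρ_mem] with x ⟨hax, hxa⟩
    have hx_pos : 0 < ρ x := ha.trans_le hax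
    have := Real.log_le_log hx_pos hxa
    rw [Real.log_mul (Real.exp_ne_zero δ) ha.ne', Real.log_exp] at this
    gcongr
  calc ∫ x in A, ρ x * Real.log (ρ x) ∂μ
      ≤ ∫ x in A, ρ x * (δ + Real.log a) ∂μ := integral_mono_ae hent (hρ.mul_const _) log_ρ_le
    _ = ω * (δ + Real.log a) := integral_mul_const _ _
    _ ≤ ω * (δ + (Real.log ω - Real.log (μ.real A))) := by gcongr
    _ = cellEntropy μ ρ A + δ * ω := by rw [cellEntropy]; ring

end Cell

lemma exists_isFiniteMeasurePartition_integral_le_tsum_cellEntropy_add [SigmaFinite μ] {ρ : X → ℝ}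
    (hρ : Integrable ρ μ) (hρ_nonneg : 0 ≤ᵐ[μ] ρ)
    (hent : Integrable (fun x => ρ x * Real.log (ρ x)) μ) {δ : ℝ} (hδ : 0 < δ) :
    ∃ A, IsFiniteMeasurePartition μ A ∧ Summable (fun i => cellEntropy μ ρ (A i)) ∧
      ∫ x, ρ x * Real.log (ρ x) ∂μ ≤ ∑' i, cellEntropy μ ρ (A i) + δ * ∫ x, ρ x ∂μ := by
  obtain ⟨A, hA, hA_mem⟩ :=
    exists_isFiniteMeasurePartition_mem_Icc_exp_mul hρ.aemeasurable hρ_nonneg hδ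
  have entropy_hasSum := hA.hasSum_setIntegral hent
  have error_hasSum := (hA.hasSum_setIntegral hρ).mul_left δ
  have upper (i : ℕ) : cellEntropy μ ρ (A i) ≤ ∫ x in A i, ρ x * Real.log (ρ x) ∂μ :=
    cellEntropy_le_setIntegral_mul_log (hA.measure_lt_top i).ne hρ.integrableOn
      (ae_restrict_of_ae hρ_nonneg) hent.integrableOn
  have lower (i : ℕ) : ∫ x in A i, ρ x * Real.log (ρ x) ∂μ ≤
      cellEntropy μ ρ (A i) + δ * ∫ x in A i, ρ x ∂μ := by
    obtain ⟨a, ha, hρ_mem⟩ := hA_mem i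
    exact setIntegral_mul_log_le_cellEntropy_add (hA.measure_lt_top i).ne hρ.integrableOn
      hent.integrableOn ha hρ_mem
  have defect_summable : Summable fun i =>
      ∫ x in A i, ρ x * Real.log (ρ x) ∂μ - cellEntropy μ ρ (A i) :=
    .of_nonneg_of_le (fun i => sub_nonneg.2 (upper i)) (fun i => sub_le_iff_le_add'.2 (lower i))
      error_hasSum.summable
  have cell_summable : Summable fun i => cellEntropy μ ρ (A i) := by
    simpa only [sub_sub_cancel] using entropy_hasSum.summable.sub defect_summable
  exact ⟨A, hA, cell_summable,
    hasSum_le lower entropy_hasSum (cell_summable.hasSum.add error_hasSum)⟩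

theorem segal_entropy_partition_variational_general [SigmaFinite μ] {ρ : X → ℝ}
    (hρ : Integrable ρ μ) (hρ_nonneg : 0 ≤ᵐ[μ] ρ)
    (hent : Integrable (fun x => ρ x * Real.log (ρ x)) μ) :
    IsLUB
      {r : ℝ | ∃ A : ℕ → Set X,
        (∀ i, MeasurableSet (A i)) ∧ Pairwise (Function.onFun Disjoint A) ∧
        (⋃ i, A i) = Set.univ ∧ (∀ i, μ (A i) < ⊤) ∧
        Summable (fun i => (∫ x in A i, ρ x ∂μ) *
          (Real.log (∫ x in A i, ρ x ∂μ) - Real.log ((μ (A i)).toReal))) ∧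
        r = ∑' i, (∫ x in A i, ρ x ∂μ) *
          (Real.log (∫ x in A i, ρ x ∂μ) - Real.log ((μ (A i)).toReal))}
      (∫ x, ρ x * Real.log (ρ x) ∂μ) := by
  constructor
  · rintro _ ⟨A, hA_meas, hA_disj, hA_univ, hA_top, h_summable, rfl⟩
    have hA : IsFiniteMeasurePartition μ A := ⟨hA_meas, hA_disj, hA_univ, hA_top⟩
    exact hasSum_le (fun i => cellEntropy_le_setIntegral_mul_log (hA_top i).ne hρ.integrableOn
      (ae_restrict_of_ae hρ_nonneg) hent.integrableOn) h_summable.hasSum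
      (hA.hasSum_setIntegral hent)
  · intro b hb
    refine le_of_forall_pos_le_add fun ε hε => ?_
    obtain ⟨δ, hδ, hδε⟩ := exists_pos_mul_lt hε (∫ x, ρ x ∂μ)
    obtain ⟨A, hA, h_summable, h_le⟩ :=
      exists_isFiniteMeasurePartition_integral_le_tsum_cellEntropy_add hρ hρ_nonneg hent hδ
    have h_tsum : ∑' i, cellEntropy μ ρ (A i) ≤ b :=
      hb ⟨A, hA.measurableSet, hA.pairwise_disjoint, hA.iUnion_eq_univ, hA.measure_lt_top,
        h_summable, rfl⟩
    linarith

end Partition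

/-- Variational formula for the Segal entropy over countable partitions (commutative case):
for σ-finite `μ` and a density `ρ ≥ 0` with `∫ ρ dμ = 1`, `ρ log ρ ∈ L¹(μ)` (`0 log 0 = 0`),
`∫ ρ log ρ dμ` is the supremum, over countable measurable partitions `(A_i)` of `X` into sets
of finite measure, of `Σ_i ω(A_i)(log ω(A_i) − log μ(A_i))` with `ω(A_i) = ∫_{A_i} ρ dμ`
(summands with `ω(A_i) = 0` or `μ(A_i) = 0` vanish automatically, since `ω(A_i) = 0` whenever
`μ(A_i) = 0`, `0 * x = 0` and `Real.log 0 = 0`). -/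
theorem segal_entropy_partition_variational
    {X : Type*} [MeasurableSpace X] (μ : Measure X) [SigmaFinite μ]
    (ρ : X → ℝ) (hρ_meas : Measurable ρ) (hρ_nonneg : ∀ x, 0 ≤ ρ x)
    (hρ_int : ∫ x, ρ x ∂μ = 1)
    (hent : Integrable (fun x => ρ x * Real.log (ρ x)) μ) :
    IsLUB
      {r : ℝ | ∃ A : ℕ → Set X,
        (∀ i, MeasurableSet (A i)) ∧ Pairwise (Function.onFun Disjoint A) ∧
        (⋃ i, A i) = Set.univ ∧ (∀ i, μ (A i) < ⊤) ∧
        Summable (fun i => (∫ x in A i, ρ x ∂μ) *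
          (Real.log (∫ x in A i, ρ x ∂μ) - Real.log ((μ (A i)).toReal))) ∧
        r = ∑' i, (∫ x in A i, ρ x ∂μ) *
          (Real.log (∫ x in A i, ρ x ∂μ) - Real.log ((μ (A i)).toReal))}
      (∫ x, ρ x * Real.log (ρ x) ∂μ) := by
  have hρ : Integrable ρ μ := .of_integral_ne_zero (hρ_int ▸ one_ne_zero)
  exact segal_entropy_partition_variational_general hρ (.of_forall hρ_nonneg) hent
end
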